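/- Let A = kQ/I be a gentle algebra and φ_A its AG-invariant. Then gl.dim A = ∞ if and only if there exists ℓ ≥ 1 with φ_A(0, ℓ) ≠ 0. -/

import Mathlib

open MulOpposite DirectSum

set_option autoImplicit false

/-- The combinatorial data of a finite quiver together with a set of
length-two relations (`rel a b` means that the length-two path `a·b` lies in
the admissible ideal `I`). -/
structure GentleData : Type 1 where
  V : Type
  A : Type
  [fintypeV : Fintype V]
  [fintypeA : Fintype A]
  [decEqV : DecidableEq V]
  [decEqA : DecidableEq A]
  src : A → V
  tgt : A → V
  rel : A → A → Prop

attribute [instance] GentleData.fintypeV GentleData.fintypeA GentleData.decEqV GentleData.decEqA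

/-- The gentleness conditions on a bound quiver `(Q, I)`:
relations are composable length-two paths; at most two arrows start
(resp. end) at every vertex; for every arrow `β` there is at most one arrow `α`
with `αβ ∉ I` and at most one with `αβ ∈ I`, and dually; and there is a bound
on the length of paths avoiding relations (admissibility). -/
def IsGentle (Q : GentleData) : Prop :=
  (∀ a b, Q.rel a b → Q.tgt a = Q.src b) ∧
  (∀ v : Q.V, Set.ncard {a : Q.A | Q.src a = v} ≤ 2) ∧
  (∀ v : Q.V, Set.ncard {a : Q.A | Q.tgt a = v} ≤ 2) ∧
  (∀ b : Q.A, Set.ncard {a : Q.A | Q.tgt a = Q.src b ∧ ¬ Q.rel a b} ≤ 1) ∧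
  (∀ b : Q.A, Set.ncard {a : Q.A | Q.tgt a = Q.src b ∧ Q.rel a b} ≤ 1) ∧
  (∀ a : Q.A, Set.ncard {b : Q.A | Q.src b = Q.tgt a ∧ ¬ Q.rel a b} ≤ 1) ∧
  (∀ a : Q.A, Set.ncard {b : Q.A | Q.src b = Q.tgt a ∧ Q.rel a b} ≤ 1) ∧
  (∃ N : ℕ, ∀ p : ℕ → Q.A, ¬ ∀ i, i < N → (Q.tgt (p i) = Q.src (p (i+1)) ∧ ¬ Q.rel (p i) (p (i+1))))

/-- Generators of the path algebra: one generator for each vertex (the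
corresponding trivial path) and one for each arrow. -/
inductive GenSym (Q : GentleData) : Type
  | vertex : Q.V → GenSym Q
  | arrow : Q.A → GenSym Q

/-- The defining relations of the algebra `kQ/I`: the trivial paths are
orthogonal idempotents summing to `1`, arrows are compatible with the trivial
paths at their source and target, and the chosen length-two paths vanish. -/
inductive GentleRel (k : Type) [Field k] (Q : GentleData) :
    FreeAlgebra k (GenSym Q) → FreeAlgebra k (GenSym Q) → Prop
  | idem (v : Q.V) : GentleRel k Q
      (FreeAlgebra.ι k (GenSym.vertex v) * FreeAlgebra.ι k (GenSym.vertex v))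
      (FreeAlgebra.ι k (GenSym.vertex v))
  | orth (v w : Q.V) (h : v ≠ w) : GentleRel k Q
      (FreeAlgebra.ι k (GenSym.vertex v) * FreeAlgebra.ι k (GenSym.vertex w)) 0
  | sum_idem : GentleRel k Q (∑ v : Q.V, FreeAlgebra.ι k (GenSym.vertex v)) 1
  | src_mul (a : Q.A) : GentleRel k Q
      (FreeAlgebra.ι k (GenSym.vertex (Q.src a)) * FreeAlgebra.ι k (GenSym.arrow a))
      (FreeAlgebra.ι k (GenSym.arrow a))
  | mul_tgt (a : Q.A) : GentleRel k Q
      (FreeAlgebra.ι k (GenSym.arrow a) * FreeAlgebra.ι k (GenSym.vertex (Q.tgt a)))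
      (FreeAlgebra.ι k (GenSym.arrow a))
  | relation (a b : Q.A) (h : Q.rel a b) : GentleRel k Q
      (FreeAlgebra.ι k (GenSym.arrow a) * FreeAlgebra.ι k (GenSym.arrow b)) 0

/-- The algebra `A = kQ/I` presented by the bound quiver `Q`. -/
abbrev GentleAlgebra (k : Type) [Field k] (Q : GentleData) : Type :=
  RingQuot (GentleRel k Q)

/-- The image in `kQ/I` of a generator. -/
noncomputable def ofGen (k : Type) [Field k] (Q : GentleData) (x : GenSym Q) :
    GentleAlgebra k Q :=
  RingQuot.mkAlgHom k (GentleRel k Q) (FreeAlgebra.ι k x)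

/-- The idempotent `e_v ∈ kQ/I` of a vertex `v`. -/
noncomputable def idemOf (k : Type) [Field k] (Q : GentleData) (v : Q.V) :
    GentleAlgebra k Q :=
  ofGen k Q (GenSym.vertex v)

/-- The element of `kQ/I` given by an arrow `a`. -/
noncomputable def arrOf (k : Type) [Field k] (Q : GentleData) (a : Q.A) :
    GentleAlgebra k Q :=
  ofGen k Q (GenSym.arrow a)

/-- The indecomposable projective right module `e_v A`, as a right submodule
(i.e. `Aᵐᵒᵖ`-submodule) of `A`. -/
noncomputable def vertexModule (k : Type) [Field k] (Q : GentleData) (v : Q.V) :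
    Submodule (GentleAlgebra k Q)ᵐᵒᵖ (GentleAlgebra k Q) :=
  Submodule.span (GentleAlgebra k Q)ᵐᵒᵖ {idemOf k Q v}

/-- The right module `αA` generated by an arrow `α`, as a right submodule of `A`. -/
noncomputable def arrowModule (k : Type) [Field k] (Q : GentleData) (a : Q.A) :
    Submodule (GentleAlgebra k Q)ᵐᵒᵖ (GentleAlgebra k Q) :=
  Submodule.span (GentleAlgebra k Q)ᵐᵒᵖ {arrOf k Q a}

/-- An oriented cycle `c` of length `ℓ` with full relations:
`t(cᵢ) = s(cᵢ₊₁)` and `cᵢ cᵢ₊₁ ∈ I` for all `i` (indices modulo `ℓ`). -/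
def IsOCFCycle (Q : GentleData) {ℓ : ℕ} (c : ZMod ℓ → Q.A) : Prop :=
  ∀ i : ZMod ℓ, Q.tgt (c i) = Q.src (c (i + 1)) ∧ Q.rel (c i) (c (i + 1))

/-- The arrow `a` lies on some oriented cycle with full relations. -/
def OnOCFCycle (Q : GentleData) (a : Q.A) : Prop :=
  ∃ ℓ : ℕ, 1 ≤ ℓ ∧ ∃ c : ZMod ℓ → Q.A, IsOCFCycle Q c ∧ ∃ i : ZMod ℓ, c i = a

/-- The whole quiver `(Q, I)` is an oriented cycle of some length `ℓ ≥ 1` with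
full relations. -/
def QuiverIsOCF (Q : GentleData) : Prop :=
  ∃ ℓ : ℕ, 1 ≤ ℓ ∧ ∃ (e : Q.V ≃ ZMod ℓ) (f : Q.A ≃ ZMod ℓ),
    (∀ a, e (Q.src a) = f a) ∧ (∀ a, e (Q.tgt a) = f a + 1) ∧
    (∀ a b, Q.rel a b ↔ f b = f a + 1)

/-- The quiver `(Q, I)` is a single point: exactly one vertex and no arrows. -/
def QuiverIsPoint (Q : GentleData) : Prop :=
  (∃ v : Q.V, ∀ w : Q.V, w = v) ∧ IsEmpty Q.A

/-- `v` is a common vertex of two distinct oriented cycles with full relations. -/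
def TwoCyclesAt (Q : GentleData) (v : Q.V) : Prop :=
  ∃ (ℓ ℓ' : ℕ), 1 ≤ ℓ ∧ 1 ≤ ℓ' ∧ ∃ (c : ZMod ℓ → Q.A) (c' : ZMod ℓ' → Q.A),
    IsOCFCycle Q c ∧ IsOCFCycle Q c' ∧ Function.Injective c ∧ Function.Injective c' ∧
    (∃ i, Q.tgt (c i) = v) ∧ (∃ j, Q.tgt (c' j) = v) ∧ Set.range c ≠ Set.range c'

/-- The set of vertices lying on an oriented cycle with full relations. -/
def ocfVertexSet (Q : GentleData) : Set Q.V :=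
  {v | ∃ a : Q.A, OnOCFCycle Q a ∧ Q.tgt a = v}

/-- Oriented cycles with full relations, identified up to cyclic rotation. -/
def ocfCycleSetoid (Q : GentleData) (ℓ : ℕ) :
    Setoid {c : ZMod ℓ → Q.A // IsOCFCycle Q c ∧ Function.Injective c} where
  r c c' := ∃ t : ZMod ℓ, ∀ i, c'.1 i = c.1 (i + t)
  iseqv := by
    refine ⟨fun c => ⟨0, fun i => by rw [add_zero]⟩, ?_, ?_⟩
    · rintro c c' ⟨t, ht⟩
      exact ⟨-t, fun i => by rw [ht (i + -t), neg_add_cancel_right]⟩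
    · rintro a b c ⟨t, ht⟩ ⟨s, hs⟩
      exact ⟨s + t, fun i => by rw [hs i, ht (i + s), add_assoc]⟩

/-- `AGzero Q ℓ` is the value `φ_A(0, ℓ)` of the AG-invariant: the number of
oriented cycles of length `ℓ` with full relations, counted up to rotation. -/
noncomputable def AGzero (Q : GentleData) (ℓ : ℕ) : ℕ :=
  Nat.card (Quotient (ocfCycleSetoid Q ℓ))

/-- A (nontrivial) forbidden path with arrows `p 0, …, p (m-1)`:
all consecutive length-two subpaths lie in `I`. -/
def IsForbiddenPath (Q : GentleData) (m : ℕ) (p : ℕ → Q.A) : Prop :=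
  ∀ i : ℕ, i + 1 < m → Q.tgt (p i) = Q.src (p (i + 1)) ∧ Q.rel (p i) (p (i + 1))

/-- A (nontrivial) forbidden thread: a maximal forbidden path (of `m ≥ 1`
arrows), i.e. one which cannot be extended on either side. -/
def IsForbiddenThread (Q : GentleData) (m : ℕ) (p : ℕ → Q.A) : Prop :=
  1 ≤ m ∧ IsForbiddenPath Q m p ∧
  (∀ b : Q.A, Q.tgt b = Q.src (p 0) → ¬ Q.rel b (p 0)) ∧
  (∀ b : Q.A, Q.src b = Q.tgt (p (m - 1)) → ¬ Q.rel (p (m - 1)) b)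

/-- A trivial forbidden thread at a vertex `v` (of length `0`). -/
def IsTrivialForbiddenThread (Q : GentleData) (v : Q.V) : Prop :=
  ({a : Q.A | Q.tgt a = v} = ∅) ∨ ({a : Q.A | Q.src a = v} = ∅) ∨
  (∃ b b' : Q.A, {a : Q.A | Q.tgt a = v} = {b} ∧ {a : Q.A | Q.src a = v} = {b'} ∧ ¬ Q.rel b b')

/-- The set of lengths of the forbidden threads of finite length. -/
def finiteForbiddenThreadLengths (Q : GentleData) : Set ℕ∞ :=
  {n : ℕ∞ | (n = 0 ∧ ∃ v : Q.V, IsTrivialForbiddenThread Q v) ∨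
    (∃ m : ℕ, n = (m : ℕ∞) ∧ ∃ p : ℕ → Q.A, IsForbiddenThread Q m p)}

/-- The set of lengths of all forbidden threads; an oriented cycle with full
relations gives rise to a forbidden thread of infinite length. -/
def forbiddenThreadLengths (Q : GentleData) : Set ℕ∞ :=
  finiteForbiddenThreadLengths Q ∪
    {n : ℕ∞ | n = ⊤ ∧ ∃ ℓ : ℕ, 1 ≤ ℓ ∧ ∃ c : ZMod ℓ → Q.A, IsOCFCycle Q c}

section Dimensions

/-- `projDimLE R n M` : the `R`-module `M` admits a projective resolution of
length at most `n`. -/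
def projDimLE (R : Type) [Ring R] (n : ℕ) (M : Type) [AddCommGroup M] [Module R M] : Prop :=
  ∃ (P : ℕ → ModuleCat.{0} R) (d : ∀ i : ℕ, ↥(P (i + 1)) →ₗ[R] ↥(P i)) (ε : ↥(P 0) →ₗ[R] M),
    (∀ i, Module.Projective R ↥(P i)) ∧
    Function.Surjective ε ∧ Function.Exact (d 0) ε ∧
    (∀ i, Function.Exact (d (i + 1)) (d i)) ∧
    (∀ i, n ≤ i → Subsingleton ↥(P (i + 1)))

/-- `injDimLE R n M` : the `R`-module `M` admits an injective coresolution of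
length at most `n`. -/
def injDimLE (R : Type) [Ring R] (n : ℕ) (M : Type) [AddCommGroup M] [Module R M] : Prop :=
  ∃ (E : ℕ → ModuleCat.{0} R) (d : ∀ i : ℕ, ↥(E i) →ₗ[R] ↥(E (i + 1))) (ι : M →ₗ[R] ↥(E 0)),
    (∀ i, Module.Injective R ↥(E i)) ∧
    Function.Injective ι ∧ Function.Exact ι (d 0) ∧
    (∀ i, Function.Exact (d i) (d (i + 1))) ∧
    (∀ i, n ≤ i → Subsingleton ↥(E (i + 1)))

/-- The projective dimension of a module, in `ℕ∞`. -/
noncomputable def projDim (R : Type) [Ring R] (M : Type) [AddCommGroup M] [Module R M] : ℕ∞ :=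
  sInf {n : ℕ∞ | ∃ m : ℕ, n = (m : ℕ∞) ∧ projDimLE R m M}

/-- The injective dimension of a module, in `ℕ∞`. -/
noncomputable def injDim (R : Type) [Ring R] (M : Type) [AddCommGroup M] [Module R M] : ℕ∞ :=
  sInf {n : ℕ∞ | ∃ m : ℕ, n = (m : ℕ∞) ∧ injDimLE R m M}

/-- The global dimension of a ring: the supremum of the projective dimensions
of all finitely generated modules. -/
noncomputable def globalDim (R : Type) [Ring R] : ℕ∞ :=
  ⨆ (M : ModuleCat.{0} R) (_ : Module.Finite R ↥M), projDim R ↥M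

/-- The left self-injective dimension: the injective dimension of `R` as a
left module over itself. -/
noncomputable def leftSelfInjDim (R : Type) [Ring R] : ℕ∞ := injDim R R

/-- The right self-injective dimension: the injective dimension of `R` as a
right module over itself. -/
noncomputable def rightSelfInjDim (R : Type) [Ring R] : ℕ∞ := injDim Rᵐᵒᵖ R

end Dimensions

section Radical

/-- The radical of a module: the intersection of its maximal submodules. -/
def radMod (R : Type) [Ring R] (M : Type) [AddCommGroup M] [Module R M] : Submodule R M :=
  sInf {N : Submodule R M | IsCoatom N}

/-- The top of a module: the quotient by its radical. -/
abbrev topMod (R : Type) [Ring R] (M : Type) [AddCommGroup M] [Module R M] : Type :=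
  M ⧸ radMod R M

/-- The socle of a module: the sum of its simple submodules. -/
def socMod (R : Type) [Ring R] (M : Type) [AddCommGroup M] [Module R M] : Submodule R M :=
  sSup {N : Submodule R M | IsAtom N}

/-- The simple right `A`-module `S(v)` at a vertex `v`, realized as the top of
the indecomposable projective `e_v A`. -/
noncomputable abbrev SimpleAt (k : Type) [Field k] (Q : GentleData) (v : Q.V) : Type :=
  topMod (GentleAlgebra k Q)ᵐᵒᵖ ↥(vertexModule k Q v)

end Radical

section Gorenstein

/-- An indecomposable module: nontrivial, and admitting no nontrivial direct
sum decomposition. -/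
def IndecomposableModule (R : Type) [Ring R] (M : Type) [AddCommGroup M] [Module R M] : Prop :=
  Nontrivial M ∧ ∀ N N' : Submodule R M, IsCompl N N' → N = ⊥ ∨ N' = ⊥

/-- A Gorenstein projective module: a syzygy of an acyclic complex of
projective modules which remains acyclic after applying `Hom(−, R)`. -/
def IsGorensteinProjective (R : Type) [Ring R] (G : Type) [AddCommGroup G] [Module R G] :
    Prop :=
  ∃ (P : ℤ → ModuleCat.{0} R) (d : ∀ n : ℤ, ↥(P n) →ₗ[R] ↥(P (n + 1))),
    (∀ n, Module.Projective R ↥(P n)) ∧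
    (∀ n, Function.Exact (d n) (d (n + 1))) ∧
    (∀ n : ℤ, Function.Exact
      (fun g : ↥(P (n + 1 + 1)) →ₗ[R] R => g ∘ₗ d (n + 1))
      (fun g : ↥(P (n + 1)) →ₗ[R] R => g ∘ₗ d n)) ∧
    Nonempty (G ≃ₗ[R] ↥(LinearMap.range (d (-1))))

/-- An indecomposable non-projective Gorenstein projective module. -/
def IsIndecNonProjGP (R : Type) [Ring R] (M : Type) [AddCommGroup M] [Module R M] : Prop :=
  IndecomposableModule R M ∧ IsGorensteinProjective R M ∧ ¬ Module.Projective R M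

/-- An indecomposable Gorenstein projective module. -/
def IsIndecGP (R : Type) [Ring R] (M : Type) [AddCommGroup M] [Module R M] : Prop :=
  IndecomposableModule R M ∧ IsGorensteinProjective R M

/-- Indecomposable non-projective Gorenstein projective right `A`-modules
(realized as right submodules of `A`), up to isomorphism. -/
noncomputable def npgpSetoid (k : Type) [Field k] (Q : GentleData) :
    Setoid {N : Submodule (GentleAlgebra k Q)ᵐᵒᵖ (GentleAlgebra k Q) //
      IsIndecNonProjGP (GentleAlgebra k Q)ᵐᵒᵖ ↥N} where
  r N N' := Nonempty (↥N.1 ≃ₗ[(GentleAlgebra k Q)ᵐᵒᵖ] ↥N'.1)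
  iseqv := ⟨fun _ => ⟨LinearEquiv.refl _ _⟩, fun ⟨e⟩ => ⟨e.symm⟩, fun ⟨e⟩ ⟨f⟩ => ⟨e.trans f⟩⟩

/-- The number of isomorphism classes of indecomposable non-projective
Gorenstein projective right `A`-modules. -/
noncomputable def numIndecNonProjGP (k : Type) [Field k] (Q : GentleData) : ℕ :=
  Nat.card (Quotient (npgpSetoid k Q))

/-- Indecomposable Gorenstein projective right `A`-modules (realized as right
submodules of `A`), up to isomorphism. -/
noncomputable def gpSetoid (k : Type) [Field k] (Q : GentleData) :
    Setoid {N : Submodule (GentleAlgebra k Q)ᵐᵒᵖ (GentleAlgebra k Q) //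
      IsIndecGP (GentleAlgebra k Q)ᵐᵒᵖ ↥N} where
  r N N' := Nonempty (↥N.1 ≃ₗ[(GentleAlgebra k Q)ᵐᵒᵖ] ↥N'.1)
  iseqv := ⟨fun _ => ⟨LinearEquiv.refl _ _⟩, fun ⟨e⟩ => ⟨e.symm⟩, fun ⟨e⟩ ⟨f⟩ => ⟨e.trans f⟩⟩

end Gorenstein

section Strings

/-- A walk in the quiver: `len` letters, the `i`-th letter (for `1 ≤ i ≤ len`)
joining the vertex `vtx (i-1)` to `vtx i`; a letter `(a, true)` is the arrow
`a` read forwards (direct), and `(a, false)` is its formal inverse. -/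
structure StrWalk (Q : GentleData) : Type where
  len : ℕ
  vtx : ℕ → Q.V
  letter : ℕ → Q.A × Bool

/-- The walk is a string: letters join consecutive vertices, the walk is
reduced (no `a a⁻` nor `a⁻ a`), and it avoids the relations. -/
def IsString (Q : GentleData) (w : StrWalk Q) : Prop :=
  (∀ i : ℕ, 1 ≤ i → i ≤ w.len →
    ((w.letter i).2 = true →
      Q.src (w.letter i).1 = w.vtx (i - 1) ∧ Q.tgt (w.letter i).1 = w.vtx i) ∧
    ((w.letter i).2 = false →
      Q.tgt (w.letter i).1 = w.vtx (i - 1) ∧ Q.src (w.letter i).1 = w.vtx i)) ∧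
  (∀ i : ℕ, 1 ≤ i → i + 1 ≤ w.len →
    (¬ ((w.letter i).1 = (w.letter (i + 1)).1 ∧ (w.letter i).2 ≠ (w.letter (i + 1)).2)) ∧
    ((w.letter i).2 = true → (w.letter (i + 1)).2 = true →
      ¬ Q.rel (w.letter i).1 (w.letter (i + 1)).1) ∧
    ((w.letter i).2 = false → (w.letter (i + 1)).2 = false →
      ¬ Q.rel (w.letter (i + 1)).1 (w.letter i).1))

/-- `M` is the string module `M(w)` of the string `w`: it has a `k`-basis
indexed by the vertices `0, …, len` of the walk, the idempotent of a vertex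
fixes exactly the basis vectors sitting at that vertex, and an arrow moves
basis vectors along the corresponding letters of the walk. -/
def IsStringModule (k : Type) [Field k] (Q : GentleData) (w : StrWalk Q) (M : Type)
    [AddCommGroup M] [Module k M] [Module (GentleAlgebra k Q)ᵐᵒᵖ M] : Prop :=
  (∀ (c : k) (m : M), (algebraMap k (GentleAlgebra k Q)ᵐᵒᵖ c) • m = c • m) ∧
  ∃ b : ℕ → M,
    LinearIndependent k (fun i : Fin (w.len + 1) => b i) ∧
    Submodule.span k (b '' {i : ℕ | i ≤ w.len}) = ⊤ ∧
    (∀ i : ℕ, i ≤ w.len → ∀ v : Q.V,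
      (op (idemOf k Q v)) • b i = if w.vtx i = v then b i else 0) ∧
    (∀ i : ℕ, i ≤ w.len → ∀ a : Q.A,
      (op (arrOf k Q a)) • b i =
        (if i + 1 ≤ w.len ∧ w.letter (i + 1) = (a, true) then b (i + 1) else 0) +
        (if 1 ≤ i ∧ w.letter i = (a, false) then b (i - 1) else 0))

/-- The vertex at position `i` is a source of the walk: the adjacent letters
point away from it. -/
def sourceAt (Q : GentleData) (w : StrWalk Q) (i : ℕ) : Prop :=
  i ≤ w.len ∧ (i = 0 ∨ (w.letter i).2 = false) ∧ (i = w.len ∨ (w.letter (i + 1)).2 = true)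

/-- The vertex at position `i` is a sink of the walk: the adjacent letters
point towards it. -/
def sinkAt (Q : GentleData) (w : StrWalk Q) (i : ℕ) : Prop :=
  i ≤ w.len ∧ (i = 0 ∨ (w.letter i).2 = true) ∧ (i = w.len ∨ (w.letter (i + 1)).2 = false)

/-- Left maximality of the inverse prefix (letters `1, …, i`) of a walk of the
shape "inverse prefix followed by direct suffix": the underlying direct path
out of the vertex at position `i` cannot be prolonged (and, when the prefix is
trivial, no second arrow leaves the starting vertex). -/
def LeftMaxAt (Q : GentleData) (w : StrWalk Q) (i : ℕ) : Prop :=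
  if 1 ≤ i then ∀ α : Q.A, Q.src α = w.vtx 0 → Q.rel (w.letter 1).1 α
  else ∀ α : Q.A, Q.src α = w.vtx 0 → (1 ≤ w.len ∧ α = (w.letter 1).1)

/-- Right maximality of the direct suffix (letters `i+1, …, len`) of a walk of
the shape "inverse prefix followed by direct suffix". -/
def RightMaxAt (Q : GentleData) (w : StrWalk Q) (i : ℕ) : Prop :=
  if i < w.len then ∀ β : Q.A, Q.src β = w.vtx w.len → Q.rel (w.letter w.len).1 β
  else ∀ β : Q.A, Q.src β = w.vtx w.len → (1 ≤ w.len ∧ β = (w.letter w.len).1)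

end Strings

section HomAlg

/-- Projective dimension at most `n`, via Mathlib's notion. -/
def PDLE (R : Type) [Ring R] (n : ℕ) (M : Type) [AddCommGroup M] [Module R M] : Prop :=
  CategoryTheory.HasProjectiveDimensionLT (ModuleCat.of R M) (n + 1)

variable {R : Type} [Ring R]

lemma PDLE_zero_iff (M : Type) [AddCommGroup M] [Module R M] :
    PDLE R 0 M ↔ Module.Projective R M := by
  rw [IsProjective.iff_projective, CategoryTheory.projective_iff_hasProjectiveDimensionLT_one]
  rfl

lemma PDLE_mono {n m : ℕ} (h : n ≤ m) (M : Type) [AddCommGroup M] [Module R M]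
    (hM : PDLE R n M) : PDLE R m M :=
  haveI : CategoryTheory.HasProjectiveDimensionLT (ModuleCat.of R M) (n + 1) := hM
  CategoryTheory.hasProjectiveDimensionLT_of_ge (ModuleCat.of R M) (n + 1) (m + 1) (by omega)

lemma PDLE_of_projective (n : ℕ) (M : Type) [AddCommGroup M] [Module R M]
    (hM : Module.Projective R M) : PDLE R n M :=
  PDLE_mono (Nat.zero_le n) M ((PDLE_zero_iff M).2 hM)

section
variable {M₁ M₂ M₃ : Type} [AddCommGroup M₁] [Module R M₁] [AddCommGroup M₂] [Module R M₂]
  [AddCommGroup M₃] [Module R M₃] (f : M₁ →ₗ[R] M₂) (g : M₂ →ₗ[R] M₃)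

/-- The short complex of an exact pair of maps. -/
def exSC (hfg : Function.Exact f g) : CategoryTheory.ShortComplex (ModuleCat.{0} R) :=
  CategoryTheory.ShortComplex.mk (ModuleCat.ofHom f) (ModuleCat.ofHom g) (by
    ext x
    exact hfg.apply_apply_eq_zero x)

lemma exSC_shortExact (hf : Function.Injective f) (hfg : Function.Exact f g)
    (hg : Function.Surjective g) : (exSC f g hfg).ShortExact where
  exact := (CategoryTheory.ShortComplex.ShortExact.moduleCat_exact_iff_function_exact _).2 hfg
  mono_f := (ModuleCat.mono_iff_injective _).2 hf
  epi_g := (ModuleCat.epi_iff_surjective _).2 hg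

lemma PDLE_middle (hf : Function.Injective f) (hfg : Function.Exact f g)
    (hg : Function.Surjective g) {n : ℕ} (h1 : PDLE R n M₁) (h3 : PDLE R n M₃) : PDLE R n M₂ :=
  (exSC_shortExact f g hf hfg hg).hasProjectiveDimensionLT_X₂ (n + 1) h1 h3

lemma PDLE_right (hf : Function.Injective f) (hfg : Function.Exact f g)
    (hg : Function.Surjective g) {n : ℕ} (h1 : PDLE R n M₁) (h2 : Module.Projective R M₂) :
    PDLE R (n + 1) M₃ :=
  (exSC_shortExact f g hf hfg hg).hasProjectiveDimensionLT_X₃ (n + 1) h1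
    (PDLE_of_projective (n + 1) M₂ h2)

lemma PDLE_left (hf : Function.Injective f) (hfg : Function.Exact f g)
    (hg : Function.Surjective g) {n : ℕ} (h3 : PDLE R (n + 1) M₃)
    (h2 : Module.Projective R M₂) : PDLE R n M₁ :=
  (exSC_shortExact f g hf hfg hg).hasProjectiveDimensionLT_X₁ (n + 1)
    (PDLE_of_projective n M₂ h2) h3

end

lemma PDLE_of_equiv {n : ℕ} {M N : Type} [AddCommGroup M] [Module R M] [AddCommGroup N]
    [Module R N] (e : M ≃ₗ[R] N) (hM : PDLE R n M) : PDLE R n N :=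
  haveI : CategoryTheory.HasProjectiveDimensionLT (ModuleCat.of R M) (n + 1) := hM
  CategoryTheory.hasProjectiveDimensionLT_of_iso e.toModuleIso (n + 1)

lemma PDLE_ker {n : ℕ} {P M : Type} [AddCommGroup P] [Module R P] [AddCommGroup M]
    [Module R M] (g : P →ₗ[R] M) (hg : Function.Surjective g) (hP : Module.Projective R P)
    (h : PDLE R (n + 1) M) : PDLE R n (LinearMap.ker g) :=
  PDLE_left (LinearMap.ker g).subtype g Subtype.val_injective
    (LinearMap.exact_subtype_ker_map g) hg h hP

lemma PDLE_of_ker {n : ℕ} {P M : Type} [AddCommGroup P] [Module R P] [AddCommGroup M]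
    [Module R M] (g : P →ₗ[R] M) (hg : Function.Surjective g) (hP : Module.Projective R P)
    (h : PDLE R n (LinearMap.ker g)) : PDLE R (n + 1) M :=
  PDLE_right (LinearMap.ker g).subtype g Subtype.val_injective
    (LinearMap.exact_subtype_ker_map g) hg h hP

lemma PDLE_of_sub {n : ℕ} {M : Type} [AddCommGroup M] [Module R M] (N : Submodule R M)
    (h1 : PDLE R n N) (h2 : PDLE R n (M ⧸ N)) : PDLE R n M :=
  PDLE_middle N.subtype N.mkQ Subtype.val_injective (LinearMap.exact_subtype_mkQ N)
    N.mkQ_surjective h1 h2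

lemma PDLE_prod {n : ℕ} {M N : Type} [AddCommGroup M] [Module R M] [AddCommGroup N]
    [Module R N] (h1 : PDLE R n M) (h2 : PDLE R n N) : PDLE R n (M × N) :=
  PDLE_middle (LinearMap.inl R M N) (LinearMap.snd R M N) LinearMap.inl_injective
    Function.Exact.inl_snd LinearMap.snd_surjective h1 h2

lemma PDLE_sup {n : ℕ} {M : Type} [AddCommGroup M] [Module R M] (N N' : Submodule R M)
    (hd : Disjoint N N') (h1 : PDLE R n N) (h2 : PDLE R n N') : PDLE R n ↥(N ⊔ N') := by
  have hinj : Function.Injective (LinearMap.coprod N.subtype N'.subtype) := by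
    rw [← LinearMap.ker_eq_bot, LinearMap.ker_coprod_of_disjoint_range]
    · simp
    · simpa using hd
  refine PDLE_of_equiv ((LinearEquiv.ofInjective _ hinj).trans (LinearEquiv.ofEq _ _ ?_))
    (PDLE_prod h1 h2)
  rw [LinearMap.range_coprod]
  simp

lemma PDLE_of_projDimLE (n : ℕ) : ∀ (M : Type) [AddCommGroup M] [Module R M],
    projDimLE R n M → PDLE R n M := by
  induction n with
  | zero =>
    rintro M _ _ ⟨P, d, ε, hP, hε, hd, _, hs⟩
    rw [PDLE_zero_iff]
    have hs0 := hs 0 le_rfl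
    have := hP 0
    refine Module.Projective.of_equiv (LinearEquiv.ofBijective ε ⟨?_, hε⟩)
    rw [injective_iff_map_eq_zero]
    intro x hx
    obtain ⟨y, rfl⟩ := (hd x).1 hx
    rw [Subsingleton.elim y 0, map_zero]
  | succ n ih =>
    rintro M _ _ ⟨P, d, ε, hP, hε, hd, hdd, hs⟩
    refine PDLE_of_ker ε hε (hP 0) (ih _ ?_)
    refine ⟨fun i => P (i + 1), fun i => d (i + 1),
      (d 0).codRestrict (LinearMap.ker ε) (fun x => hd.apply_apply_eq_zero x),
      fun i => hP _, ?_, ?_, fun i => hdd _, fun i hi => hs (i + 1) (by omega)⟩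
    · rintro ⟨x, hx⟩
      obtain ⟨y, rfl⟩ := (hd x).1 hx
      exact ⟨y, rfl⟩
    · intro x
      rw [← hdd 0 x]
      exact Subtype.ext_iff

lemma projDimLE_of_PDLE (n : ℕ) : ∀ (M : Type) [AddCommGroup M] [Module R M],
    PDLE R n M → projDimLE R n M := by
  induction n with
  | zero =>
    intro M _ _ h
    rw [PDLE_zero_iff] at h
    refine ⟨fun i => Nat.casesOn i (ModuleCat.of R M) (fun _ => ModuleCat.of R PUnit),
      fun i => 0, LinearMap.id, ?_, Function.surjective_id, ?_, ?_, ?_⟩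
    · rintro (_ | i)
      · exact h
      · exact (inferInstance : Module.Projective R PUnit)
    · intro x
      constructor
      · intro hx; exact ⟨0, hx.symm⟩
      · rintro ⟨y, rfl⟩; rfl
    · intro i x
      refine ⟨fun _ => ⟨0, Subsingleton.elim (α := PUnit) _ _⟩, fun _ => rfl⟩
    · intro i _
      exact (inferInstance : Subsingleton PUnit)
  | succ n ih =>
    intro M _ _ h
    let g : (M →₀ R) →ₗ[R] M := Finsupp.linearCombination R id
    have hg : Function.Surjective g := Finsupp.linearCombination_id_surjective R M
    obtain ⟨P, d, ε, hP, hε, hd, hdd, hs⟩ := ih _ (PDLE_ker g hg inferInstance h)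
    refine ⟨fun i => Nat.casesOn i (ModuleCat.of R (M →₀ R)) P,
      fun i => match i with
        | 0 => (LinearMap.ker g).subtype ∘ₗ ε
        | i + 1 => d i, g, ?_, hg, ?_, ?_, ?_⟩
    · rintro (_ | i)
      · exact (inferInstance : Module.Projective R (M →₀ R))
      · exact hP i
    · intro x
      constructor
      · intro hx
        obtain ⟨y, hy⟩ := hε ⟨x, hx⟩
        exact ⟨y, congrArg Subtype.val hy⟩
      · rintro ⟨y, rfl⟩
        exact (ε y).2
    · rintro (_ | i)
      · intro x
        refine Iff.trans ?_ (hd x)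
        exact Iff.symm Subtype.ext_iff
      · exact hdd i
    · rintro (_ | i) hi
      · omega
      · exact hs i (by omega)

end HomAlg

section Basis

variable (k : Type) [Field k] (Q : GentleData)

lemma idemOf_mul_self (v : Q.V) : idemOf k Q v * idemOf k Q v = idemOf k Q v := by
  simpa [idemOf, ofGen] using RingQuot.mkAlgHom_rel k (GentleRel.idem (k := k) v)

lemma idemOf_mul_of_ne (v w : Q.V) (h : v ≠ w) : idemOf k Q v * idemOf k Q w = 0 := by
  simpa [idemOf, ofGen] using RingQuot.mkAlgHom_rel k (GentleRel.orth (k := k) v w h)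

lemma sum_idemOf : ∑ v : Q.V, idemOf k Q v = 1 := by
  simpa [idemOf, ofGen] using RingQuot.mkAlgHom_rel k (GentleRel.sum_idem (k := k) (Q := Q))

lemma idemOf_src_mul (a : Q.A) : idemOf k Q (Q.src a) * arrOf k Q a = arrOf k Q a := by
  simpa [idemOf, arrOf, ofGen] using RingQuot.mkAlgHom_rel k (GentleRel.src_mul (k := k) a)

lemma arrOf_mul_tgt (a : Q.A) : arrOf k Q a * idemOf k Q (Q.tgt a) = arrOf k Q a := by
  simpa [idemOf, arrOf, ofGen] using RingQuot.mkAlgHom_rel k (GentleRel.mul_tgt (k := k) a)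

lemma arrOf_mul_rel (a b : Q.A) (h : Q.rel a b) : arrOf k Q a * arrOf k Q b = 0 := by
  simpa [arrOf, ofGen] using RingQuot.mkAlgHom_rel k (GentleRel.relation (k := k) a b h)

/-- Induction principle for the algebra. -/
lemma GA_induction {motive : GentleAlgebra k Q → Prop}
    (halg : ∀ r, motive (algebraMap k _ r)) (hv : ∀ v, motive (idemOf k Q v))
    (ha : ∀ a, motive (arrOf k Q a))
    (hmul : ∀ x y, motive x → motive y → motive (x * y))
    (hadd : ∀ x y, motive x → motive y → motive (x + y)) (x : GentleAlgebra k Q) : motive x := by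
  obtain ⟨x, rfl⟩ := RingQuot.mkAlgHom_surjective k (GentleRel k Q) x
  induction x using FreeAlgebra.induction with
  | grade0 r => rw [AlgHom.commutes]; exact halg r
  | grade1 x =>
    cases x with
    | vertex v => exact hv v
    | arrow a => exact ha a
  | mul x y hx hy => rw [map_mul]; exact hmul _ _ hx hy
  | add x y hx hy => rw [map_add]; exact hadd _ _ hx hy

/-- Formal combinations of (vertex, word) pairs. -/
abbrev PF : Type := (Q.V × List Q.A) →₀ k

/-- The word `l` may be prolonged on the left by `a`. -/
def okHead (a : Q.A) (l : List Q.A) : Prop := ∀ b ∈ l.head?, ¬ Q.rel a b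

open Classical in
/-- Action of the idempotents. -/
noncomputable def Lv (w : Q.V) : PF k Q →ₗ[k] PF k Q :=
  Finsupp.linearCombination k (fun p => if p.1 = w then Finsupp.single p 1 else 0)

open Classical in
/-- Action of the arrows. -/
noncomputable def La (a : Q.A) : PF k Q →ₗ[k] PF k Q :=
  Finsupp.linearCombination k (fun p => if p.1 = Q.tgt a ∧ okHead Q a p.2 then
    Finsupp.single (Q.src a, a :: p.2) 1 else 0)

open Classical in
lemma Lv_single (w : Q.V) (p : Q.V × List Q.A) :
    Lv k Q w (Finsupp.single p 1) = if p.1 = w then Finsupp.single p 1 else 0 := by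
  simp [Lv]

open Classical in
lemma La_single (a : Q.A) (p : Q.V × List Q.A) :
    La k Q a (Finsupp.single p 1) = if p.1 = Q.tgt a ∧ okHead Q a p.2 then
      Finsupp.single (Q.src a, a :: p.2) 1 else 0 := by
  simp [La]

/-- Action of generators. -/
noncomputable def Lgen : GenSym Q → Module.End k (PF k Q)
  | GenSym.vertex v => Lv k Q v
  | GenSym.arrow a => La k Q a

lemma Lgen_rel (x y : FreeAlgebra k (GenSym Q)) (h : GentleRel k Q x y) :
    FreeAlgebra.lift k (Lgen k Q) x = FreeAlgebra.lift k (Lgen k Q) y := by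
  induction h with
  | idem v =>
    ext p : 2
    by_cases hp : p.1 = v <;> simp [Lgen, Lv_single, hp]
  | orth v w h =>
    ext p : 2
    by_cases hp : p.1 = w
    · have : p.1 ≠ v := fun h' => h (h'.symm.trans hp)
      simp [Lgen, Lv_single, hp, h.symm]
    · simp [Lgen, Lv_single, hp]
  | sum_idem =>
    ext p : 2
    simp [Lgen, Lv_single]
  | src_mul a =>
    ext p : 2
    by_cases hp : p.1 = Q.tgt a ∧ okHead Q a p.2 <;> simp [Lgen, Lv_single, La_single, hp]
  | mul_tgt a =>
    ext p : 2
    by_cases hp : p.1 = Q.tgt a <;> simp [Lgen, Lv_single, La_single, hp]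
  | relation a b h =>
    ext p : 2
    have hno : ¬ okHead Q a (b :: p.2) := by simp [okHead, h]
    by_cases hp : p.1 = Q.tgt b ∧ okHead Q b p.2 <;> simp [Lgen, La_single, hp, hno]

/-- The left regular representation on words. -/
noncomputable def Lrep : GentleAlgebra k Q →ₐ[k] Module.End k (PF k Q) :=
  RingQuot.liftAlgHom k ⟨FreeAlgebra.lift k (Lgen k Q), fun {x y} h => Lgen_rel k Q x y h⟩

lemma Lrep_idem (v : Q.V) : Lrep k Q (idemOf k Q v) = Lv k Q v := by
  simp [Lrep, idemOf, ofGen, Lgen]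

lemma Lrep_arr (a : Q.A) : Lrep k Q (arrOf k Q a) = La k Q a := by
  simp [Lrep, arrOf, ofGen, Lgen]

/-- Coefficients of an element. -/
noncomputable def sig (x : GentleAlgebra k Q) : PF k Q :=
  Lrep k Q x (∑ v : Q.V, Finsupp.single (v, []) 1)

/-- The element of a word. -/
noncomputable def phi0 (p : Q.V × List Q.A) : GentleAlgebra k Q :=
  idemOf k Q p.1 * (p.2.map (arrOf k Q)).prod

/-- The evaluation map. -/
noncomputable def phi : PF k Q →ₗ[k] GentleAlgebra k Q :=
  Finsupp.linearCombination k (phi0 k Q)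

lemma arrOf_mul_phi0 (a : Q.A) (p : Q.V × List Q.A) :
    phi k Q (La k Q a (Finsupp.single p 1)) = arrOf k Q a * phi0 k Q p := by
  obtain ⟨v, l⟩ := p
  rw [La_single]
  by_cases hv : v = Q.tgt a
  · subst hv
    by_cases hok : okHead Q a l
    · simp [hok, phi, phi0, ← mul_assoc, arrOf_mul_tgt, idemOf_src_mul]
    · have hz : arrOf k Q a * (l.map (arrOf k Q)).prod = 0 := by
        cases l with
        | nil => simp [okHead] at hok
        | cons b l =>
          simp [okHead] at hok
          simp [← mul_assoc, arrOf_mul_rel k Q a b hok]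
      simp [hok, phi0, ← mul_assoc, arrOf_mul_tgt, hz]
  · have : arrOf k Q a * idemOf k Q v = 0 := by
      rw [← arrOf_mul_tgt, mul_assoc, idemOf_mul_of_ne k Q _ _ (Ne.symm hv), mul_zero]
    simp [hv, phi0, ← mul_assoc, this]

lemma idemOf_mul_phi0 (w : Q.V) (p : Q.V × List Q.A) :
    phi k Q (Lv k Q w (Finsupp.single p 1)) = idemOf k Q w * phi0 k Q p := by
  obtain ⟨v, l⟩ := p
  rw [Lv_single]
  by_cases hv : v = w
  · subst hv
    simp [phi, phi0, ← mul_assoc, idemOf_mul_self]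
  · simp [hv, phi0, ← mul_assoc, idemOf_mul_of_ne k Q _ _ (Ne.symm hv)]

lemma phi_Lrep (x : GentleAlgebra k Q) : ∀ f, phi k Q (Lrep k Q x f) = x * phi k Q f := by
  induction x using GA_induction with
  | halg r => intro f; simp [Algebra.smul_def]
  | hv v =>
    intro f
    rw [Lrep_idem]
    have : phi k Q ∘ₗ Lv k Q v = LinearMap.mulLeft k (idemOf k Q v) ∘ₗ phi k Q := by
      refine Finsupp.lhom_ext' (fun p => LinearMap.ext_ring ?_)
      have h1 : phi k Q (Finsupp.single p 1) = phi0 k Q p := by simp [phi]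
      simpa only [LinearMap.comp_apply, Finsupp.lsingle_apply, h1, LinearMap.mulLeft_apply]
        using idemOf_mul_phi0 k Q v p
    exact LinearMap.congr_fun this f
  | ha a =>
    intro f
    rw [Lrep_arr]
    have : phi k Q ∘ₗ La k Q a = LinearMap.mulLeft k (arrOf k Q a) ∘ₗ phi k Q := by
      refine Finsupp.lhom_ext' (fun p => LinearMap.ext_ring ?_)
      have h1 : phi k Q (Finsupp.single p 1) = phi0 k Q p := by simp [phi]
      simpa only [LinearMap.comp_apply, Finsupp.lsingle_apply, h1, LinearMap.mulLeft_apply]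
        using arrOf_mul_phi0 k Q a p
    exact LinearMap.congr_fun this f
  | hmul x y hx hy => intro f; simp [hx, hy, mul_assoc]
  | hadd x y hx hy => intro f; simp [hx, hy, add_mul]

lemma phi_sig (x : GentleAlgebra k Q) : phi k Q (sig k Q x) = x := by
  rw [sig, phi_Lrep]
  simp [phi, phi0, sum_idemOf]

lemma sig_mul (x y : GentleAlgebra k Q) : sig k Q (x * y) = Lrep k Q x (sig k Q y) := by
  simp [sig]

lemma sig_add (x y : GentleAlgebra k Q) : sig k Q (x + y) = sig k Q x + sig k Q y := by
  rw [sig, map_add]; rfl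

lemma sig_zero : sig k Q 0 = 0 := by simp [sig]

lemma sig_eq_zero {x : GentleAlgebra k Q} (h : sig k Q x = 0) : x = 0 := by
  rw [← phi_sig k Q x, h, map_zero]

lemma expand (x : GentleAlgebra k Q) :
    x = ∑ p ∈ (sig k Q x).support, sig k Q x p • phi0 k Q p := by
  conv_lhs => rw [← phi_sig k Q x]
  rfl

open Classical in
lemma Lv_apply (w : Q.V) (f : PF k Q) (v : Q.V) (l : List Q.A) :
    Lv k Q w f (v, l) = if v = w then f (v, l) else 0 := by
  induction f using Finsupp.induction_linear with
  | zero => simp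
  | add f g hf hg => rw [map_add, Finsupp.add_apply, hf, hg]; split_ifs <;> simp
  | single p c =>
    rw [← mul_one c, ← smul_eq_mul, ← Finsupp.smul_single, map_smul, Lv_single]
    by_cases hp : p.1 = w <;> by_cases hv : v = w <;> simp [hp, hv, Finsupp.single_apply]
    · rintro rfl; exact absurd hp hv
    · rintro rfl; exact absurd rfl hp

open Classical in
lemma La_apply (a : Q.A) (f : PF k Q) (l : List Q.A) :
    La k Q a f (Q.src a, a :: l) = if okHead Q a l then f (Q.tgt a, l) else 0 := by
  induction f using Finsupp.induction_linear with
  | zero => simp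
  | add f g hf hg => rw [map_add, Finsupp.add_apply, hf, hg]; split_ifs <;> simp
  | single p c =>
    rw [← mul_one c, ← smul_eq_mul, ← Finsupp.smul_single, map_smul, La_single]
    obtain ⟨v, l'⟩ := p
    by_cases hp : v = Q.tgt a
    · subst hp
      by_cases hl : l' = l
      · subst hl
        by_cases h : okHead Q a l' <;> simp [h]
      · by_cases h : okHead Q a l <;> by_cases h' : okHead Q a l' <;>
          simp [h, h', hl]
    · by_cases h : okHead Q a l <;> simp [h, hp]

lemma La_apply_of_ne (a : Q.A) (f : PF k Q) (v : Q.V) (l : List Q.A)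
    (hl : l.head? ≠ some a) : La k Q a f (v, l) = 0 := by
  induction f using Finsupp.induction_linear with
  | zero => simp
  | add f g hf hg => rw [map_add, Finsupp.add_apply, hf, hg, add_zero]
  | single p c =>
    rw [← mul_one c, ← smul_eq_mul, ← Finsupp.smul_single, map_smul, La_single]
    split_ifs
    · rw [Finsupp.smul_apply, Finsupp.single_apply, if_neg, smul_zero]
      intro h
      have h2 : a :: p.2 = l := congrArg Prod.snd h
      apply hl
      rw [← h2]
      rfl
    · simp

lemma sig_arr_self (b : Q.A) : sig k Q (arrOf k Q b) (Q.src b, [b]) = 1 := by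
  classical
  rw [sig, Lrep_arr, La_apply]
  simp [okHead, Finsupp.finsetSum_apply, Finsupp.single_apply]

lemma Lrep_nil (x : GentleAlgebra k Q) : ∀ f : PF k Q, (∀ v, f (v, []) = 0) →
    ∀ v, Lrep k Q x f (v, []) = 0 := by
  classical
  induction x using GA_induction with
  | halg r => intro f hf v; simp [hf]
  | hv w => intro f hf v; rw [Lrep_idem, Lv_apply]; simp [hf]
  | ha a => intro f hf v; rw [Lrep_arr, La_apply_of_ne]; simp
  | hmul x y hx hy => intro f hf v; rw [map_mul]; exact hx _ (hy _ hf) v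
  | hadd x y hx hy => intro f hf v; simp [hx f hf v, hy f hf v]

/-- An arrow is not of the form `b w b`. -/
lemma arr_ne (b : Q.A) (w : GentleAlgebra k Q)
    (h : arrOf k Q b * w * arrOf k Q b = arrOf k Q b) : False := by
  classical
  have h1 := sig_arr_self k Q b
  rw [← h, mul_assoc, sig_mul, Lrep_arr, La_apply, sig_mul, Lrep_nil] at h1
  · simp at h1
  · intro v
    have := La_apply_of_ne k Q b (∑ v : Q.V, Finsupp.single (v, []) 1) v [] (by simp)
    rwa [← Lrep_arr] at this

end Basis

section Modules

variable (k : Type) [Field k] (Q : GentleData)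

/-- Left multiplication as a map of right modules. -/
noncomputable def lm (x : GentleAlgebra k Q) :
    GentleAlgebra k Q →ₗ[(GentleAlgebra k Q)ᵐᵒᵖ] GentleAlgebra k Q where
  toFun y := x * y
  map_add' y z := mul_add x y z
  map_smul' r y := by
    change x * (y * unop r) = (x * y) * unop r
    rw [mul_assoc]

/-- The right module `xA`. -/
noncomputable def rM (x : GentleAlgebra k Q) :
    Submodule (GentleAlgebra k Q)ᵐᵒᵖ (GentleAlgebra k Q) := LinearMap.range (lm k Q x)

lemma mem_rM {x z : GentleAlgebra k Q} : z ∈ rM k Q x ↔ ∃ y, x * y = z := Iff.rfl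

lemma mul_mem_right {N : Submodule (GentleAlgebra k Q)ᵐᵒᵖ (GentleAlgebra k Q)}
    {z : GentleAlgebra k Q} (h : z ∈ N) (y : GentleAlgebra k Q) : z * y ∈ N :=
  N.smul_mem (op y) h

lemma ksmul_mem {N : Submodule (GentleAlgebra k Q)ᵐᵒᵖ (GentleAlgebra k Q)}
    {z : GentleAlgebra k Q} (h : z ∈ N) (c : k) : c • z ∈ N := by
  rw [Algebra.smul_def, Algebra.commutes]
  exact mul_mem_right k Q h _

lemma mem_rM_idem {v : Q.V} {z : GentleAlgebra k Q} :
    z ∈ rM k Q (idemOf k Q v) ↔ idemOf k Q v * z = z := by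
  constructor
  · rintro ⟨y, rfl⟩
    change idemOf k Q v * (idemOf k Q v * y) = idemOf k Q v * y
    rw [← mul_assoc, idemOf_mul_self]
  · intro h
    exact ⟨z, h⟩

lemma projective_idem (v : Q.V) :
    Module.Projective (GentleAlgebra k Q)ᵐᵒᵖ (rM k Q (idemOf k Q v)) := by
  have : Module.Projective (GentleAlgebra k Q)ᵐᵒᵖ (GentleAlgebra k Q) :=
    Module.Projective.of_equiv (MulOpposite.opLinearEquiv (GentleAlgebra k Q)ᵐᵒᵖ :
      GentleAlgebra k Q ≃ₗ[(GentleAlgebra k Q)ᵐᵒᵖ] (GentleAlgebra k Q)ᵐᵒᵖ).symm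
  refine Module.Projective.of_split (rM k Q (idemOf k Q v)).subtype
    (lm k Q (idemOf k Q v)).rangeRestrict ?_
  ext ⟨z, hz⟩
  exact (mem_rM_idem k Q).1 hz

/-- The sum of the modules `aA`, `a ∈ s`. -/
noncomputable def KM (s : Finset Q.A) :
    Submodule (GentleAlgebra k Q)ᵐᵒᵖ (GentleAlgebra k Q) := s.sup (fun a => rM k Q (arrOf k Q a))

lemma KM_insert (a : Q.A) (s : Finset Q.A) :
    KM k Q (insert a s) = rM k Q (arrOf k Q a) ⊔ KM k Q s := Finset.sup_insert

lemma KM_singleton (a : Q.A) : KM k Q {a} = rM k Q (arrOf k Q a) := Finset.sup_singleton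

lemma sig_mem_KM (s : Finset Q.A) : ∀ z ∈ KM k Q s, ∀ v l,
    (∀ a ∈ s, l.head? ≠ some a) → sig k Q z (v, l) = 0 := by
  induction s using Finset.induction_on with
  | empty =>
    intro z hz v l _
    have : z = 0 := by simpa [KM] using hz
    rw [this, sig_zero]; rfl
  | insert a s ha ih =>
    intro z hz v l hl
    rw [KM_insert, Submodule.mem_sup] at hz
    obtain ⟨_, ⟨y, rfl⟩, z', hz', rfl⟩ := hz
    change sig k Q (arrOf k Q a * y + z') (v, l) = 0
    rw [sig_add, sig_mul, Lrep_arr, Finsupp.add_apply,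
      La_apply_of_ne k Q a _ v l (hl a (Finset.mem_insert_self a s)),
      ih z' hz' v l (fun b hb => hl b (Finset.mem_insert_of_mem hb)), add_zero]

lemma disjoint_KM (a : Q.A) (s : Finset Q.A) (ha : a ∉ s) :
    Disjoint (rM k Q (arrOf k Q a)) (KM k Q s) := by
  rw [Submodule.disjoint_def]
  intro z h1 h2
  apply sig_eq_zero k Q
  ext ⟨v, l⟩
  by_cases hl : l.head? = some a
  · apply sig_mem_KM k Q s z h2
    intro b hb hb'
    rw [hl] at hb'
    cases hb'
    exact ha hb
  · rw [← KM_singleton] at h1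
    apply sig_mem_KM k Q _ z h1
    intro b hb
    rw [Finset.mem_singleton.1 hb]
    exact hl

lemma PDLE_KM {n : ℕ} (s : Finset Q.A)
    (h : ∀ a ∈ s, PDLE (GentleAlgebra k Q)ᵐᵒᵖ n (rM k Q (arrOf k Q a))) :
    PDLE (GentleAlgebra k Q)ᵐᵒᵖ n (KM k Q s) := by
  induction s using Finset.induction_on with
  | empty =>
    apply PDLE_of_projective
    have : KM k Q ∅ = ⊥ := Finset.sup_empty
    rw [this]
    infer_instance
  | insert a s ha ih =>
    rw [KM_insert]
    exact PDLE_sup _ _ (disjoint_KM k Q a s ha) (h a (Finset.mem_insert_self a s))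
      (ih (fun b hb => h b (Finset.mem_insert_of_mem hb)))

lemma rM_le_KM {a : Q.A} {s : Finset Q.A} (ha : a ∈ s) : rM k Q (arrOf k Q a) ≤ KM k Q s :=
  Finset.le_sup (f := fun a => rM k Q (arrOf k Q a)) ha

lemma phi0_cons_mem {b : Q.A} {s : Finset Q.A} (hb : b ∈ s) (v : Q.V) (l : List Q.A) :
    phi0 k Q (v, b :: l) ∈ KM k Q s := by
  apply rM_le_KM k Q hb
  by_cases h : v = Q.src b
  · subst h
    refine ⟨(l.map (arrOf k Q)).prod, ?_⟩
    change arrOf k Q b * (l.map (arrOf k Q)).prod = _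
    simp [phi0, ← mul_assoc, idemOf_src_mul]
  · have : idemOf k Q v * arrOf k Q b = 0 := by
      rw [← idemOf_src_mul, ← mul_assoc, idemOf_mul_of_ne k Q _ _ h, zero_mul]
    simp [phi0, ← mul_assoc, this]

lemma phi0_cons_eq_zero {b : Q.A} (v : Q.V) (l : List Q.A) (h : v ≠ Q.src b) :
    phi0 k Q (v, b :: l) = 0 := by
  have : idemOf k Q v * arrOf k Q b = 0 := by
    rw [← idemOf_src_mul, ← mul_assoc, idemOf_mul_of_ne k Q _ _ h, zero_mul]
  simp [phi0, ← mul_assoc, this]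

lemma mem_of_supp {N : Submodule (GentleAlgebra k Q)ᵐᵒᵖ (GentleAlgebra k Q)}
    {x : GentleAlgebra k Q} (h : ∀ v l, sig k Q x (v, l) ≠ 0 → phi0 k Q (v, l) ∈ N) :
    x ∈ N := by
  rw [expand k Q x]
  refine N.sum_mem (fun p hp => ksmul_mem k Q (h p.1 p.2 ?_) _)
  simpa using hp

lemma sig_idem_mul {v w : Q.V} {x : GentleAlgebra k Q} (hx : idemOf k Q v * x = x)
    {l : List Q.A} (h : sig k Q x (w, l) ≠ 0) : w = v := by
  classical
  by_contra hne
  apply h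
  rw [← hx, sig_mul, Lrep_idem, Lv_apply, if_neg hne]

lemma arr_ker {a : Q.A} {x : GentleAlgebra k Q} (hx : idemOf k Q (Q.tgt a) * x = x)
    (h : arrOf k Q a * x = 0) (s : Finset Q.A) (hs : ∀ b, Q.rel a b → b ∈ s) :
    x ∈ KM k Q s := by
  classical
  apply mem_of_supp
  intro v l hvl
  obtain rfl := sig_idem_mul k Q hx hvl
  have h1 : sig k Q (arrOf k Q a * x) (Q.src a, a :: l) = 0 := by rw [h, sig_zero]; rfl
  rw [sig_mul, Lrep_arr, La_apply] at h1
  split_ifs at h1 with hok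
  · exact absurd h1 hvl
  · cases l with
    | nil => simp [okHead] at hok
    | cons b l =>
      simp [okHead] at hok
      exact phi0_cons_mem k Q (hs b hok) _ _

lemma sig_idem (v : Q.V) : sig k Q (idemOf k Q v) = Finsupp.single (v, []) 1 := by
  classical
  rw [sig, Lrep_idem, map_sum]
  simp [Lv_single]

lemma idem_decomp {v : Q.V} {x : GentleAlgebra k Q} (hx : idemOf k Q v * x = x)
    (s : Finset Q.A) (hs : ∀ b, Q.src b = v → b ∈ s) :
    ∃ c : k, x - c • idemOf k Q v ∈ KM k Q s := by
  refine ⟨sig k Q x (v, []), ?_⟩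
  set c := sig k Q x (v, []) with hc
  have hx' : idemOf k Q v * (x - c • idemOf k Q v) = x - c • idemOf k Q v := by
    rw [mul_sub, hx, mul_smul_comm, idemOf_mul_self]
  have hsig : sig k Q (x - c • idemOf k Q v) = sig k Q x - c • Finsupp.single (v, []) 1 := by
    rw [← sig_idem]
    simp only [sig, map_sub, map_smul, LinearMap.sub_apply, LinearMap.smul_apply]
  apply mem_of_supp
  intro w l hl
  obtain rfl := sig_idem_mul k Q hx' hl
  cases l with
  | nil =>
    rw [hsig] at hl
    simp [hc] at hl
  | cons b l =>
    by_cases hb : w = Q.src b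
    · exact phi0_cons_mem k Q (hs b hb.symm) _ _
    · rw [phi0_cons_eq_zero k Q w l hb]
      exact Submodule.zero_mem _

section
variable {k Q}
variable {v : Q.V} {s : Finset Q.A} {M : Type} [AddCommGroup M] [Module (GentleAlgebra k Q)ᵐᵒᵖ M]
  (g : rM k Q (idemOf k Q v) →ₗ[(GentleAlgebra k Q)ᵐᵒᵖ] M)

lemma KM_le_idem (hs : ∀ b ∈ s, Q.src b = v) : KM k Q s ≤ rM k Q (idemOf k Q v) := by
  refine Finset.sup_le (fun b hb => ?_)
  rintro _ ⟨y, rfl⟩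
  rw [mem_rM_idem]
  change idemOf k Q v * (arrOf k Q b * y) = arrOf k Q b * y
  rw [← mul_assoc, ← hs b hb, idemOf_src_mul]

lemma exact_KM (hs : ∀ b ∈ s, Q.src b = v)
    (hg : ∀ x, g x = 0 ↔ (x : GentleAlgebra k Q) ∈ KM k Q s) :
    Function.Exact (Submodule.inclusion (KM_le_idem hs)) g := by
  intro x
  rw [hg]
  constructor
  · intro h; exact ⟨⟨x, h⟩, rfl⟩
  · rintro ⟨y, rfl⟩; exact y.2

lemma PDLE_up (hs : ∀ b ∈ s, Q.src b = v) (hsur : Function.Surjective g)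
    (hg : ∀ x, g x = 0 ↔ (x : GentleAlgebra k Q) ∈ KM k Q s) {n : ℕ}
    (h : PDLE (GentleAlgebra k Q)ᵐᵒᵖ n (KM k Q s)) :
    PDLE (GentleAlgebra k Q)ᵐᵒᵖ (n + 1) M := by
  refine PDLE_right (M₂ := ↥(rM k Q (idemOf k Q v))) (Submodule.inclusion (KM_le_idem hs)) g (Submodule.inclusion_injective _)
    (exact_KM g hs hg) hsur h ?_
  exact projective_idem k Q v

lemma PDLE_down (hs : ∀ b ∈ s, Q.src b = v) (hsur : Function.Surjective g)
    (hg : ∀ x, g x = 0 ↔ (x : GentleAlgebra k Q) ∈ KM k Q s) {n : ℕ}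
    (h : PDLE (GentleAlgebra k Q)ᵐᵒᵖ (n + 1) M) :
    PDLE (GentleAlgebra k Q)ᵐᵒᵖ n (KM k Q s) := by
  refine PDLE_left (M₂ := ↥(rM k Q (idemOf k Q v))) (Submodule.inclusion (KM_le_idem hs)) g (Submodule.inclusion_injective _)
    (exact_KM g hs hg) hsur h ?_
  exact projective_idem k Q v

end

/-- The projective cover of `aA`. -/
noncomputable def garr (a : Q.A) : rM k Q (idemOf k Q (Q.tgt a)) →ₗ[(GentleAlgebra k Q)ᵐᵒᵖ]
    rM k Q (arrOf k Q a) :=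
  (lm k Q (arrOf k Q a)).rangeRestrict ∘ₗ (rM k Q (idemOf k Q (Q.tgt a))).subtype

lemma garr_surj (a : Q.A) : Function.Surjective (garr k Q a) := by
  rintro ⟨_, ⟨y, rfl⟩⟩
  refine ⟨⟨idemOf k Q (Q.tgt a) * y, ⟨y, rfl⟩⟩, Subtype.ext ?_⟩
  change arrOf k Q a * (idemOf k Q (Q.tgt a) * y) = arrOf k Q a * y
  rw [← mul_assoc, arrOf_mul_tgt]

lemma garr_eq_zero (a : Q.A) (s : Finset Q.A) (hs : ∀ b, Q.rel a b ↔ b ∈ s)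
    (x : rM k Q (idemOf k Q (Q.tgt a))) :
    garr k Q a x = 0 ↔ (x : GentleAlgebra k Q) ∈ KM k Q s := by
  have h0 : garr k Q a x = 0 ↔ arrOf k Q a * (x : GentleAlgebra k Q) = 0 := Subtype.ext_iff
  rw [h0]
  constructor
  · intro h
    exact arr_ker k Q ((mem_rM_idem k Q).1 x.2) h s (fun b hb => (hs b).1 hb)
  · intro h
    have hle : KM k Q s ≤ LinearMap.ker (lm k Q (arrOf k Q a)) := by
      refine Finset.sup_le (fun b hb => ?_)
      rintro _ ⟨y, rfl⟩
      change arrOf k Q a * (arrOf k Q b * y) = 0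
      rw [← mul_assoc, arrOf_mul_rel k Q a b ((hs b).2 hb), zero_mul]
    exact hle h

/-- On a cycle with full relations, no `aA` is projective. -/
lemma not_projective_arr (a b : Q.A) (hab : Q.rel a b) (huniq : ∀ b', Q.rel a b' ↔ b' ∈ ({b} : Finset Q.A))
    (hsrc : Q.tgt a = Q.src b) :
    ¬ Module.Projective (GentleAlgebra k Q)ᵐᵒᵖ (rM k Q (arrOf k Q a)) := by
  intro hp
  obtain ⟨h, hh⟩ := Module.projective_lifting_property (garr k Q a) LinearMap.id (garr_surj k Q a)
  let a' : rM k Q (arrOf k Q a) := ⟨arrOf k Q a, 1, mul_one _⟩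
  let y : rM k Q (idemOf k Q (Q.tgt a)) := h a'
  have hy1 : arrOf k Q a * (y : GentleAlgebra k Q) = arrOf k Q a :=
    congrArg Subtype.val (LinearMap.congr_fun hh a')
  have hy2 : idemOf k Q (Q.tgt a) * (y : GentleAlgebra k Q) = y := (mem_rM_idem k Q).1 y.2
  have hab0 : (op (arrOf k Q b)) • a' = 0 := Subtype.ext (arrOf_mul_rel k Q a b hab)
  have hy3 : (y : GentleAlgebra k Q) * arrOf k Q b = 0 := by
    have h1 : (op (arrOf k Q b)) • y = 0 := by rw [← map_smul, hab0, map_zero]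
    exact congrArg Subtype.val h1
  have hz : idemOf k Q (Q.tgt a) - (y : GentleAlgebra k Q) ∈ KM k Q {b} := by
    apply arr_ker k Q (a := a)
    · rw [mul_sub, idemOf_mul_self, hy2]
    · rw [mul_sub, arrOf_mul_tgt, hy1, sub_self]
    · exact fun b' hb' => (huniq b').1 hb'
  rw [KM_singleton] at hz
  obtain ⟨w, hw⟩ := hz
  change arrOf k Q b * w = _ at hw
  apply arr_ne k Q b w
  rw [hw, sub_mul, hy3, sub_zero, hsrc, idemOf_src_mul]

lemma infinite_pd (c : ℕ → Q.A) (h1 : ∀ i, Q.rel (c i) (c (i + 1)))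
    (h2 : ∀ i, Q.tgt (c i) = Q.src (c (i + 1)))
    (huniq : ∀ i b', Q.rel (c i) b' → b' = c (i + 1)) (n : ℕ) :
    ∀ i, ¬ PDLE (GentleAlgebra k Q)ᵐᵒᵖ n (rM k Q (arrOf k Q (c i))) := by
  have hu : ∀ i b', Q.rel (c i) b' ↔ b' ∈ ({c (i + 1)} : Finset Q.A) := by
    intro i b'
    rw [Finset.mem_singleton]
    exact ⟨huniq i b', fun h => h ▸ h1 i⟩
  induction n with
  | zero =>
    intro i h
    rw [PDLE_zero_iff] at h
    exact not_projective_arr k Q _ _ (h1 i) (hu i) (h2 i) h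
  | succ n ih =>
    intro i h
    apply ih (i + 1)
    rw [← KM_singleton]
    refine PDLE_down (garr k Q (c i)) ?_ (garr_surj k Q _) (garr_eq_zero k Q _ _ (hu i)) h
    intro b hb
    rw [Finset.mem_singleton.1 hb, h2 i]

end Modules

section Final

variable (k : Type) [Field k] (Q : GentleData)

lemma chain_of_prod_ne_zero (l : List Q.A) (h : (l.map (arrOf k Q)).prod ≠ 0) :
    l.IsChain (fun a b => Q.tgt a = Q.src b ∧ ¬ Q.rel a b) := by
  induction l with
  | nil => exact List.IsChain.nil
  | cons a l ih =>
    cases l with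
    | nil => exact List.IsChain.singleton a
    | cons b l =>
      rw [List.isChain_cons_cons]
      refine ⟨⟨?_, ?_⟩, ih ?_⟩
      · by_contra hne
        apply h
        have : arrOf k Q a * arrOf k Q b = 0 := by
          rw [← arrOf_mul_tgt k Q a, ← idemOf_src_mul k Q b, mul_assoc,
            ← mul_assoc (idemOf k Q _), idemOf_mul_of_ne k Q _ _ hne, zero_mul, mul_zero]
        simp [← mul_assoc, this]
      · intro hr
        apply h
        simp [← mul_assoc, arrOf_mul_rel k Q a b hr]
      · intro h0
        apply h
        rw [List.map_cons, List.prod_cons, h0, mul_zero]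

lemma exists_bound (hQ : IsGentle Q) : ∃ N : ℕ, ∀ l : List Q.A, N < l.length →
    (l.map (arrOf k Q)).prod = 0 := by
  obtain ⟨N, hN⟩ := hQ.2.2.2.2.2.2.2
  refine ⟨N, fun l hl => ?_⟩
  by_contra h
  have hc := List.isChain_iff_getElem.1 (chain_of_prod_ne_zero k Q l h)
  apply hN (fun i => l.getD i (l[0]'(by omega)))
  intro i hi
  have := hc i (by omega)
  simpa [List.getD_eq_getElem, show i < l.length by omega, show i + 1 < l.length by omega]
    using this

lemma finite_dim (hQ : IsGentle Q) : Module.Finite k (GentleAlgebra k Q) := by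
  obtain ⟨N, hN⟩ := exists_bound k Q hQ
  have hfin : {p : Q.V × List Q.A | p.2.length ≤ N}.Finite := by
    have := (Set.finite_univ (α := Q.V)).prod (List.finite_length_le Q.A N)
    refine this.subset ?_
    rintro ⟨v, l⟩ h
    exact ⟨trivial, h⟩
  refine ⟨(Submodule.fg_def).2 ⟨phi0 k Q '' {p : Q.V × List Q.A | p.2.length ≤ N},
    hfin.image _, ?_⟩⟩
  rw [eq_top_iff]
  intro x _
  rw [expand k Q x]
  refine Submodule.sum_mem _ (fun p _ => Submodule.smul_mem _ _ ?_)
  by_cases hp : p.2.length ≤ N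
  · exact Submodule.subset_span ⟨p, hp, rfl⟩
  · have : phi0 k Q p = 0 := by rw [phi0, hN p.2 (by omega), mul_zero]
    rw [this]
    exact Submodule.zero_mem _

section Simple
variable {M : Type} [AddCommGroup M] [Module (GentleAlgebra k Q)ᵐᵒᵖ M]

lemma exists_socle [Nontrivial M] (hQ : IsGentle Q) :
    ∃ (v : Q.V) (y : M), y ≠ 0 ∧ op (idemOf k Q v) • y = y ∧ ∀ a, op (arrOf k Q a) • y = 0 := by
  obtain ⟨N, hN⟩ := exists_bound k Q hQ
  have h1 : ∃ y : M, y ≠ 0 ∧ ∀ a, op (arrOf k Q a) • y = 0 := by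
    by_contra hcon
    push Not at hcon
    obtain ⟨y, hy⟩ := exists_ne (0 : M)
    have h2 : ∀ n : ℕ, ∃ l : List Q.A, l.length = n ∧
        op ((l.map (arrOf k Q)).prod) • y ≠ 0 := by
      intro n
      induction n with
      | zero => exact ⟨[], rfl, by simpa using hy⟩
      | succ n ih =>
        obtain ⟨l, hl, hne⟩ := ih
        obtain ⟨a, ha⟩ := hcon _ hne
        refine ⟨l ++ [a], by simp [hl], ?_⟩
        rw [List.map_append, List.prod_append, op_mul, mul_smul]
        simpa using ha
    obtain ⟨l, hl, hne⟩ := h2 (N + 1)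
    apply hne
    rw [hN l (by omega), op_zero, zero_smul]
  obtain ⟨y, hy, hya⟩ := h1
  have h3 : ∃ v, op (idemOf k Q v) • y ≠ 0 := by
    by_contra hcon
    push Not at hcon
    apply hy
    have : op (∑ v : Q.V, idemOf k Q v) • y = 0 := by
      rw [Finset.op_sum, Finset.sum_smul]
      exact Finset.sum_eq_zero (fun v _ => hcon v)
    rwa [sum_idemOf, op_one, one_smul] at this
  obtain ⟨v, hv⟩ := h3
  refine ⟨v, op (idemOf k Q v) • y, hv, ?_, fun a => ?_⟩
  · rw [← mul_smul, ← op_mul, idemOf_mul_self]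
  · rw [← mul_smul, ← op_mul]
    by_cases h : v = Q.src a
    · rw [h, idemOf_src_mul, hya]
    · rw [← idemOf_src_mul, ← mul_assoc, idemOf_mul_of_ne k Q _ _ h, zero_mul, op_zero, zero_smul]

/-- The orbit map. -/
noncomputable def gsim (v : Q.V) (y : M) :
    rM k Q (idemOf k Q v) →ₗ[(GentleAlgebra k Q)ᵐᵒᵖ] M where
  toFun x := op (x : GentleAlgebra k Q) • y
  map_add' x z := by
    rw [← add_smul]; rfl
  map_smul' r x := by
    change op ((x : GentleAlgebra k Q) * unop r) • y = r • (op (x : GentleAlgebra k Q) • y)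
    rw [op_mul, mul_smul, op_unop]

lemma gsim_eq_zero (v : Q.V) (y : M) (hy : y ≠ 0) (hyv : op (idemOf k Q v) • y = y)
    (hya : ∀ a, op (arrOf k Q a) • y = 0) (s : Finset Q.A) (hs : ∀ b, Q.src b = v ↔ b ∈ s)
    (x : rM k Q (idemOf k Q v)) :
    gsim k Q v y x = 0 ↔ (x : GentleAlgebra k Q) ∈ KM k Q s := by
  have hK : ∀ z ∈ KM k Q s, op z • y = 0 := by
    let T : Submodule (GentleAlgebra k Q)ᵐᵒᵖ (GentleAlgebra k Q) :=
      { carrier := {z | op z • y = 0}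
        add_mem' := by
          intro a b ha hb
          change op (a + b) • y = 0
          rw [op_add, add_smul, ha, hb, add_zero]
        zero_mem' := by
          change op (0 : GentleAlgebra k Q) • y = 0
          rw [op_zero, zero_smul]
        smul_mem' := by
          intro r z hz
          change op (z * unop r) • y = 0
          have hz' : op z • y = 0 := hz
          rw [op_mul, mul_smul, hz', smul_zero] }
    have hle : KM k Q s ≤ T := by
      refine Finset.sup_le (fun b _ => ?_)
      rintro _ ⟨z, rfl⟩
      change op (arrOf k Q b * z) • y = 0
      rw [op_mul, mul_smul, hya, smul_zero]
    exact fun z hz => hle hz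
  constructor
  · intro h
    have h' : op (x : GentleAlgebra k Q) • y = 0 := h
    obtain ⟨c, hc⟩ := idem_decomp k Q ((mem_rM_idem k Q).1 x.2) s (fun b hb => (hs b).1 hb)
    have h2 := hK _ hc
    rw [op_sub, sub_smul, h', zero_sub, neg_eq_zero] at h2
    have hc0 : c = 0 := by
      by_contra hne
      apply hy
      have h3 : op (algebraMap k (GentleAlgebra k Q) c⁻¹) • (op (c • idemOf k Q v) • y) = 0 := by
        rw [h2, smul_zero]
      rw [← mul_smul, ← op_mul, ← Algebra.commutes, ← Algebra.smul_def, smul_smul,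
        inv_mul_cancel₀ hne, one_smul, hyv] at h3
      exact h3
    simpa [hc0] using hc
  · intro h
    exact hK _ h

lemma PDLE_simple [IsSimpleModule (GentleAlgebra k Q)ᵐᵒᵖ M] (hQ : IsGentle Q) {n : ℕ}
    (h : ∀ a, PDLE (GentleAlgebra k Q)ᵐᵒᵖ n (rM k Q (arrOf k Q a))) :
    PDLE (GentleAlgebra k Q)ᵐᵒᵖ (n + 1) M := by
  have := IsSimpleModule.nontrivial (GentleAlgebra k Q)ᵐᵒᵖ M
  obtain ⟨v, y, hy, hyv, hya⟩ := exists_socle k Q (M := M) hQ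
  have hs : ∀ b, Q.src b = v ↔ b ∈ Finset.univ.filter (fun b => Q.src b = v) := by simp
  refine PDLE_up (gsim k Q v y) (fun b hb => (hs b).2 hb) ?_
    (gsim_eq_zero k Q v y hy hyv hya _ hs) (PDLE_KM k Q _ (fun a _ => h a))
  refine (LinearMap.surjective_or_eq_zero (R := (GentleAlgebra k Q)ᵐᵒᵖ)
    (M := ↥(rM k Q (idemOf k Q v))) (N := M) (gsim k Q v y)).resolve_right ?_
  intro h0
  apply hy
  have := LinearMap.congr_fun h0 ⟨idemOf k Q v, 1, mul_one _⟩
  rw [← hyv]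
  exact this

end Simple

lemma PDLE_finiteLength (hQ : IsGentle Q) {n : ℕ}
    (h : ∀ a, PDLE (GentleAlgebra k Q)ᵐᵒᵖ n (rM k Q (arrOf k Q a)))
    (M : Type) [AddCommGroup M] [Module (GentleAlgebra k Q)ᵐᵒᵖ M]
    (hM : IsFiniteLength (GentleAlgebra k Q)ᵐᵒᵖ M) : PDLE (GentleAlgebra k Q)ᵐᵒᵖ (n + 1) M := by
  induction hM with
  | of_subsingleton => exact PDLE_of_projective _ _ inferInstance
  | of_simple_quotient _ ih => exact PDLE_of_sub _ ih (PDLE_simple k Q hQ h)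

lemma PDLE_finite (hQ : IsGentle Q) {n : ℕ}
    (h : ∀ a, PDLE (GentleAlgebra k Q)ᵐᵒᵖ n (rM k Q (arrOf k Q a)))
    (M : Type) [AddCommGroup M] [Module (GentleAlgebra k Q)ᵐᵒᵖ M]
    [Module.Finite (GentleAlgebra k Q)ᵐᵒᵖ M] : PDLE (GentleAlgebra k Q)ᵐᵒᵖ (n + 1) M := by
  have := finite_dim k Q hQ
  have : Module.Finite k (GentleAlgebra k Q)ᵐᵒᵖ :=
    Module.Finite.equiv (MulOpposite.opLinearEquiv k)
  have : IsArtinianRing (GentleAlgebra k Q)ᵐᵒᵖ := IsArtinianRing.of_finite k _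
  apply PDLE_finiteLength k Q hQ h
  rw [isFiniteLength_iff_isNoetherian_isArtinian]
  exact ⟨inferInstance, inferInstance⟩

lemma exists_cycle (p : ℕ → Q.A) (hp : ∀ i, Q.tgt (p i) = Q.src (p (i + 1)) ∧
    Q.rel (p i) (p (i + 1))) :
    ∃ ℓ : ℕ, 1 ≤ ℓ ∧ ∃ c : ZMod ℓ → Q.A, IsOCFCycle Q c ∧ Function.Injective c := by
  classical
  have hex : ∃ ℓ : ℕ, 1 ≤ ℓ ∧ ∃ i, p i = p (i + ℓ) := by
    obtain ⟨i, j, hne, hij⟩ := Finite.exists_ne_map_eq_of_infinite p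
    rcases lt_or_gt_of_ne hne with h | h
    · exact ⟨j - i, by omega, i, by rw [hij]; congr 1; omega⟩
    · exact ⟨i - j, by omega, j, by rw [← hij]; congr 1; omega⟩
  obtain ⟨hpos, i, hi⟩ := Nat.find_spec hex
  have hmin := fun m (hm : m < Nat.find hex) => Nat.find_min hex hm
  generalize Nat.find hex = ℓ at hpos hi hmin
  have : NeZero ℓ := ⟨by omega⟩
  have hinj : ∀ x y : ℕ, x < y → y < ℓ → p (i + x) ≠ p (i + y) := by
    intro x y hxy hy he
    refine hmin (y - x) (by omega) ⟨by omega, i + x, ?_⟩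
    rw [he]; congr 1; omega
  refine ⟨ℓ, hpos, fun x => p (i + x.val), ?_, ?_⟩
  · intro x
    have hx := ZMod.val_lt x
    have hval : (x + 1).val = (x.val + 1) % ℓ := by
      rw [ZMod.val_add, ZMod.val_one_eq_one_mod, Nat.add_mod_mod]
    have : p (i + (x + 1).val) = p (i + x.val + 1) := by
      rw [hval]
      rcases Nat.lt_or_ge (x.val + 1) ℓ with h | h
      · rw [Nat.mod_eq_of_lt h]; rfl
      · have h' : x.val + 1 = ℓ := by omega
        rw [h', Nat.mod_self, add_zero, add_assoc, h', hi]
    simp only [this]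
    exact hp _
  · intro x y hxy
    apply ZMod.val_injective
    rcases lt_trichotomy x.val y.val with h | h | h
    · exact absurd hxy (hinj _ _ h (ZMod.val_lt y))
    · exact h
    · exact absurd hxy.symm (hinj _ _ h (ZMod.val_lt x))

lemma AGzero_ne_zero_iff (ℓ : ℕ) (hℓ : 1 ≤ ℓ) :
    AGzero Q ℓ ≠ 0 ↔ ∃ c : ZMod ℓ → Q.A, IsOCFCycle Q c ∧ Function.Injective c := by
  have : NeZero ℓ := ⟨by omega⟩
  have hfin : Finite (Quotient (ocfCycleSetoid Q ℓ)) := inferInstance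
  rw [AGzero, Nat.card_ne_zero]
  constructor
  · rintro ⟨⟨q⟩, _⟩
    obtain ⟨c, _⟩ := Quotient.exists_rep q
    exact ⟨c.1, c.2⟩
  · rintro ⟨c, hc⟩
    exact ⟨⟨Quotient.mk _ ⟨c, hc⟩⟩, hfin⟩

lemma exists_PD_bound (hrel : ∀ a b, Q.rel a b → Q.tgt a = Q.src b)
    (hno : ¬ ∃ ℓ : ℕ, 1 ≤ ℓ ∧ ∃ c : ZMod ℓ → Q.A, IsOCFCycle Q c ∧ Function.Injective c) :
    ∃ n, ∀ a, PDLE (GentleAlgebra k Q)ᵐᵒᵖ n (rM k Q (arrOf k Q a)) := by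
  classical
  have hwf : WellFounded (fun b a => Q.rel a b) := by
    rw [wellFounded_iff_isEmpty_descending_chain]
    refine ⟨fun ⟨p, hp⟩ => hno (exists_cycle Q p (fun i => ⟨hrel _ _ (hp i), hp i⟩))⟩
  have hone : ∀ a, ∃ n, PDLE (GentleAlgebra k Q)ᵐᵒᵖ n (rM k Q (arrOf k Q a)) := by
    intro a
    induction a using hwf.induction with
    | _ a ih =>
      choose! f hf using ih
      let s := Finset.univ.filter (fun b => Q.rel a b)
      have hs : ∀ b, Q.rel a b ↔ b ∈ s := by simp [s]
      refine ⟨s.sup f + 1, PDLE_up (garr k Q a) (fun b hb => (hrel _ _ ((hs b).2 hb)).symm)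
        (garr_surj k Q a) (garr_eq_zero k Q a s hs) (PDLE_KM k Q s (fun b hb => ?_))⟩
      exact PDLE_mono (Finset.le_sup hb) _ (hf b ((hs b).2 hb))
  choose f hf using hone
  exact ⟨Finset.univ.sup f, fun a => PDLE_mono (Finset.le_sup (Finset.mem_univ a)) _ (hf a)⟩

end Final

/-- For a gentle algebra `A = kQ/I` with AG-invariant `φ_A`,
one has `gl.dim A = ∞` if and only if `φ_A(0, ℓ) ≠ 0` for some `ℓ ≥ 1`. -/
theorem globalDim_eq_top_iff_AGzero_ne_zero
    (k : Type) [Field k] [IsAlgClosed k] (Q : GentleData) (hQ : IsGentle Q) :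
    globalDim (GentleAlgebra k Q)ᵐᵒᵖ = ⊤ ↔ ∃ ℓ : ℕ, 1 ≤ ℓ ∧ AGzero Q ℓ ≠ 0 := by
  constructor
  · intro htop
    by_contra hno
    obtain ⟨n, hn⟩ := exists_PD_bound k Q hQ.1 (by
      rintro ⟨ℓ, hℓ, h⟩
      exact hno ⟨ℓ, hℓ, (AGzero_ne_zero_iff Q ℓ hℓ).2 h⟩)
    have hle : globalDim (GentleAlgebra k Q)ᵐᵒᵖ ≤ ((n + 1 : ℕ) : ℕ∞) := by
      refine iSup_le (fun M => iSup_le (fun hM => sInf_le ⟨n + 1, rfl, ?_⟩))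
      exact projDimLE_of_PDLE _ _ (PDLE_finite k Q hQ hn M)
    rw [htop, top_le_iff] at hle
    exact ENat.natCast_ne_top _ hle
  · rintro ⟨ℓ, hℓ, h⟩
    obtain ⟨c, hc, _⟩ := (AGzero_ne_zero_iff Q ℓ hℓ).1 h
    have hinf := infinite_pd k Q (fun i => c (i : ZMod ℓ))
      (fun i => by simpa using (hc i).2) (fun i => by simpa using (hc i).1)
      (by
        intro i b' hb'
        have hn := hQ.2.2.2.2.2.2.1 (c (i : ZMod ℓ))
        rw [Set.ncard_le_one (Set.toFinite _)] at hn
        refine hn _ ⟨(hQ.1 _ _ hb').symm, hb'⟩ _ ?_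
        push_cast
        exact ⟨(hc i).1.symm, (hc i).2⟩)
    let M := rM k Q (arrOf k Q (c ((0 : ℕ) : ZMod ℓ)))
    have hpd : projDim (GentleAlgebra k Q)ᵐᵒᵖ M = ⊤ := by
      rw [projDim, sInf_eq_top]
      rintro _ ⟨m, rfl, hm⟩
      exact absurd (PDLE_of_projDimLE m _ hm) (hinf m 0)
    have hfin : Module.Finite (GentleAlgebra k Q)ᵐᵒᵖ M := by
      have : Module.Finite (GentleAlgebra k Q)ᵐᵒᵖ (GentleAlgebra k Q) :=
        Module.Finite.equiv (MulOpposite.opLinearEquiv (GentleAlgebra k Q)ᵐᵒᵖ :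
          GentleAlgebra k Q ≃ₗ[(GentleAlgebra k Q)ᵐᵒᵖ] (GentleAlgebra k Q)ᵐᵒᵖ).symm
      exact Module.Finite.range _
    rw [eq_top_iff, ← hpd]
    exact le_iSup₂_of_le (ModuleCat.of (GentleAlgebra k Q)ᵐᵒᵖ M) hfin le_rfl
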